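/- Let (X, d, T) be a topological dynamical system and let U be a finite open cover of X. Then for every δ ∈ (0,1), the topological entropy of the cover satisfies h_top(U,T) = sup_{μ ∈ E_T(X)} h_μ^S(U, δ). -/

import Mathlib

open Filter MeasureTheory Set Topology

variable {X : Type*}

/-- The dynamical (Bowen) metric `d_n(x,y) = max_{0 ≤ k ≤ n-1} d(T^k x, T^k y)`. -/
noncomputable def dynDist [MetricSpace X] (T : X → X) (n : ℕ) (x y : X) : ℝ :=
  ⨆ k ∈ Finset.range n, dist (T^[k] x) (T^[k] y)

/-- The open dynamical ball `B_n(x, ε) = {y : d_n(x,y) < ε}`. -/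
def dynBall [MetricSpace X] (T : X → X) (n : ℕ) (x : X) (ε : ℝ) : Set X :=
  {y | dynDist T n x y < ε}

/-- `s_n(K, ε)`: the maximal cardinality of an `(n,ε)`-separated subset of `K`. -/
noncomputable def sepNum [MetricSpace X] (T : X → X) (n : ℕ) (K : Set X) (ε : ℝ) : ℕ :=
  sSup {m | ∃ E : Finset X, ↑E ⊆ K ∧
    (∀ x ∈ E, ∀ y ∈ E, x ≠ y → ε < dynDist T n x y) ∧ E.card = m}

/-- `S(K, ε) = limsup_n (1/n) log s_n(K, ε)`. -/
noncomputable def sepEnt [MetricSpace X] (T : X → X) (K : Set X) (ε : ℝ) : EReal :=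
  limsup (fun n : ℕ => ((Real.log (sepNum T n K ε) / n : ℝ) : EReal)) atTop

/-- `r_n(K, ε)`: the minimal cardinality of an `(n,ε)`-spanning set for `K`. -/
noncomputable def spanNum [MetricSpace X] (T : X → X) (n : ℕ) (K : Set X) (ε : ℝ) : ℕ :=
  sInf {m | ∃ F : Finset X, (∀ x ∈ K, ∃ y ∈ F, dynDist T n x y ≤ ε) ∧ F.card = m}

/-- `R(K, ε) = limsup_n (1/n) log r_n(K, ε)`. -/
noncomputable def spanEnt [MetricSpace X] (T : X → X) (K : Set X) (ε : ℝ) : EReal :=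
  limsup (fun n : ℕ => ((Real.log (spanNum T n K ε) / n : ℝ) : EReal)) atTop

/-- Upper metric mean dimension. -/
noncomputable def mdimUpper [MetricSpace X] (T : X → X) : EReal :=
  limsup (fun ε : ℝ => sepEnt T univ ε / ((Real.log (1 / ε) : ℝ) : EReal)) (𝓝[>] (0:ℝ))

/-- Lower metric mean dimension. -/
noncomputable def mdimLower [MetricSpace X] (T : X → X) : EReal :=
  liminf (fun ε : ℝ => sepEnt T univ ε / ((Real.log (1 / ε) : ℝ) : EReal)) (𝓝[>] (0:ℝ))

/-- The ergodic `T`-invariant Borel probability measures. -/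
def ergodicMeasures [MeasurableSpace X] (T : X → X) : Set (Measure X) :=
  {μ | IsProbabilityMeasure μ ∧ Ergodic T μ}

/-- `U` is a finite open cover of `X`. -/
def IsFiniteOpenCover [TopologicalSpace X] (U : Finset (Set X)) : Prop :=
  (∀ V ∈ U, IsOpen V) ∧ ⋃₀ (U : Set (Set X)) = univ

/-- The cover `U^n = ⋁_{i=0}^{n-1} T^{-i} U`. -/
def dynRefine (T : X → X) (U : Finset (Set X)) (n : ℕ) : Set (Set X) :=
  {V | ∃ f : Fin n → Set X, (∀ i, f i ∈ U) ∧ V = ⋂ i : Fin n, T^[(i : ℕ)] ⁻¹' f i}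

/-- `N(C)`: the minimal cardinality of a subcover of `C`. -/
noncomputable def coverNum (C : Set (Set X)) : ℕ :=
  sInf {m | ∃ F : Finset (Set X), ↑F ⊆ C ∧ ⋃₀ (F : Set (Set X)) = univ ∧ F.card = m}

/-- `N_μ(U^n, δ)`: minimal number of members of `U^n` needed to cover a set of measure ≥ δ. -/
noncomputable def shapiraNum [MeasurableSpace X] (T : X → X) (μ : Measure X)
    (U : Finset (Set X)) (n : ℕ) (δ : ℝ) : ℕ :=
  sInf {m | ∃ F : Finset (Set X), ↑F ⊆ dynRefine T U n ∧
    ENNReal.ofReal δ ≤ μ (⋃₀ (F : Set (Set X))) ∧ F.card = m}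

/-- Shapira's entropy `h_μ^S(U, δ) = limsup_n (1/n) log N_μ(U^n, δ)`. -/
noncomputable def shapiraEnt [MeasurableSpace X] (T : X → X) (μ : Measure X)
    (U : Finset (Set X)) (δ : ℝ) : EReal :=
  limsup (fun n : ℕ => ((Real.log (shapiraNum T μ U n δ) / n : ℝ) : EReal)) atTop

/-- `N_μ^δ(n, ε)`: smallest number of open `(n,ε)`-dynamical balls whose union has
measure `> δ`. -/
noncomputable def katokNum [MetricSpace X] [MeasurableSpace X] (T : X → X) (μ : Measure X)
    (n : ℕ) (ε δ : ℝ) : ℕ :=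
  sInf {m | ∃ F : Finset X, ENNReal.ofReal δ < μ (⋃ x ∈ F, dynBall T n x ε) ∧ F.card = m}

/-- Katok's entropy `h_μ^K(ε, δ) = limsup_n (1/n) log N_μ^δ(n, ε)`. -/
noncomputable def katokEnt [MetricSpace X] [MeasurableSpace X] (T : X → X) (μ : Measure X)
    (ε δ : ℝ) : EReal :=
  limsup (fun n : ℕ => ((Real.log (katokNum T μ n ε δ) / n : ℝ) : EReal)) atTop

/-- Lower Katok entropy `h̲_μ^K(ε, δ) = liminf_n (1/n) log N_μ^δ(n, ε)`. -/
noncomputable def katokEntLower [MetricSpace X] [MeasurableSpace X] (T : X → X) (μ : Measure X)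
    (ε δ : ℝ) : EReal :=
  liminf (fun n : ℕ => ((Real.log (katokNum T μ n ε δ) / n : ℝ) : EReal)) atTop

/-- `Ñ_μ^δ(n, ε)`: smallest number of sets of `d_n`-diameter ≤ ε whose union has
measure `> δ`. -/
noncomputable def katokNumTilde [MetricSpace X] [MeasurableSpace X] (T : X → X) (μ : Measure X)
    (n : ℕ) (ε δ : ℝ) : ℕ :=
  sInf {m | ∃ F : Finset (Set X), (∀ A ∈ F, ∀ x ∈ A, ∀ y ∈ A, dynDist T n x y ≤ ε) ∧
    ENNReal.ofReal δ < μ (⋃₀ (F : Set (Set X))) ∧ F.card = m}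

/-- Brin–Katok local entropy `h_μ^{BK}(x, ε) = limsup_n -(1/n) log μ(B_n(x, ε))`. -/
noncomputable def brinKatok [MetricSpace X] [MeasurableSpace X] (T : X → X) (μ : Measure X)
    (x : X) (ε : ℝ) : EReal :=
  limsup (fun n : ℕ => -(ENNReal.log (μ (dynBall T n x ε))) / (n : EReal)) atTop

/-- Lower Brin–Katok local entropy `h̲_μ^{BK}(x, ε) = liminf_n -(1/n) log μ(B_n(x, ε))`. -/
noncomputable def brinKatokLower [MetricSpace X] [MeasurableSpace X] (T : X → X) (μ : Measure X)
    (x : X) (ε : ℝ) : EReal :=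
  liminf (fun n : ℕ => -(ENNReal.log (μ (dynBall T n x ε))) / (n : EReal)) atTop

/-- Local entropy function `h_d(x, ε) = inf { S(K, ε) : K closed neighborhood of x }`. -/
noncomputable def locEnt [MetricSpace X] (T : X → X) (x : X) (ε : ℝ) : EReal :=
  ⨅ K ∈ {K : Set X | IsClosed K ∧ K ∈ 𝓝 x}, sepEnt T K ε

/-- Local spanning entropy `h̃_d(x, ε) = inf { R(K, ε) : K closed neighborhood of x }`. -/
noncomputable def locSpanEnt [MetricSpace X] (T : X → X) (x : X) (ε : ℝ) : EReal :=
  ⨅ K ∈ {K : Set X | IsClosed K ∧ K ∈ 𝓝 x}, spanEnt T K ε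

/-- `U_x^n`: the union of all cells of `U^n` containing `x`. -/
def dynCoverCell (T : X → X) (U : Finset (Set X)) (n : ℕ) (x : X) : Set X :=
  ⋃₀ {V | V ∈ dynRefine T U n ∧ x ∈ V}

/-!
Let a cylinder of length `n` cost `r ^ n` with `r = e⁻ˢ`, and call a set null if it has covers by
cylinders, of any lengths, of arbitrarily small total cost. If `h_μ^S(U, δ) < s` for an ergodic `μ`,
then for large `n` few cylinders of length `n` cover a set of measure at least `δ`; the `limsup` of
these sets is null and charged by `μ`, and by ergodicity its preimages, still null, have full
measure.

The converse tool is a parsing argument: given a finite set `g` of words of total cost at most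
`1/2`, cut an orbit greedily into words of `g`, using single letters where none applies. Weighing
the parsings shows that the points which rarely leave the cylinders of `g` are covered by about
`r⁻ⁿ` cylinders of length `n`. By Markov's inequality, every ergodic `μ` charging a null set charges
the `limsup` of these rare exit sets for some `g`. There are only countably many `g`, so a single
null set is charged by all ergodic measures, and the union of a countable family of cylinders of
total cost at most `1/2` has full measure for all of them.

The complement of that union is closed, so its measure is maximised over the invariant measures at
an ergodic one (upper semicontinuity and Krein–Milman) and vanishes for all invariant measures.
Limits of empirical measures then show that, for a finite subfamily of the cylinders and all large
`n`, every point is a rare exit point; the parsing argument thus covers the whole space.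
-/

section Words

variable {ι : Type*} {T : X → X} {u : ι → Set X}

/-- The cylinder `⋂ i, T⁻ⁱ u (wᵢ)` of points whose orbit follows the word `w` through the
cover `u`. -/
def wordCylinder (T : X → X) (u : ι → Set X) : List ι → Set X
  | [] => univ
  | a :: w => u a ∩ T ⁻¹' wordCylinder T u w

/-- The union of the cylinders of a set `G` of words, possibly of different lengths. -/
def cylinderUnion (T : X → X) (u : ι → Set X) (G : Set (List ι)) : Set X :=
  ⋃ w ∈ G, wordCylinder T u w

lemma mem_cylinderUnion {G : Set (List ι)} {x : X} :
    x ∈ cylinderUnion T u G ↔ ∃ w ∈ G, x ∈ wordCylinder T u w := by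
  simp only [cylinderUnion, mem_iUnion, exists_prop]

lemma cylinderUnion_mono {G H : Set (List ι)} (h : G ⊆ H) :
    cylinderUnion T u G ⊆ cylinderUnion T u H :=
  biUnion_mono h fun _ _ => Subset.rfl

lemma cylinderUnion_iUnion {κ : Sort*} (G : κ → Set (List ι)) :
    cylinderUnion T u (⋃ k, G k) = ⋃ k, cylinderUnion T u (G k) :=
  biUnion_iUnion G _

lemma wordCylinder_append (w v : List ι) :
    wordCylinder T u (w ++ v) = wordCylinder T u w ∩ T^[w.length] ⁻¹' wordCylinder T u v := by
  induction w with
  | nil => simp only [wordCylinder, List.nil_append, univ_inter, List.length_nil,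
      Function.iterate_zero, preimage_id]
  | cons a w ih => simp only [wordCylinder, List.cons_append, List.length_cons, ih,
      preimage_inter, inter_assoc, Function.iterate_succ, preimage_comp]

lemma wordCylinder_subset_take (w : List ι) (n : ℕ) :
    wordCylinder T u w ⊆ wordCylinder T u (w.take n) := by
  conv_lhs => rw [← List.take_append_drop n w, wordCylinder_append]
  exact inter_subset_left

lemma wordCylinder_ofFn {n : ℕ} (f : Fin n → ι) :
    wordCylinder T u (List.ofFn f) = ⋂ i : Fin n, T^[(i : ℕ)] ⁻¹' u (f i) := by
  induction n with
  | zero => simp only [List.ofFn_zero, wordCylinder, iInter_of_empty]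
  | succ n ih =>
    rw [List.ofFn_succ, wordCylinder, ih, preimage_iInter]
    ext x
    simp only [mem_inter_iff, mem_iInter, Fin.forall_fin_succ, mem_preimage, Fin.val_zero,
      Function.iterate_zero, id_eq, Fin.val_succ, Function.iterate_succ_apply]

lemma isOpen_wordCylinder [TopologicalSpace X] (hT : Continuous T) (hu : ∀ a, IsOpen (u a))
    (w : List ι) : IsOpen (wordCylinder T u w) := by
  induction w with
  | nil => exact isOpen_univ
  | cons a w ih => exact (hu a).inter (ih.preimage hT)

lemma isOpen_cylinderUnion [TopologicalSpace X] (hT : Continuous T) (hu : ∀ a, IsOpen (u a))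
    (G : Set (List ι)) : IsOpen (cylinderUnion T u G) :=
  isOpen_biUnion fun w _ => isOpen_wordCylinder hT hu w

lemma exists_mem_wordCylinder (hu : ⋃ a, u a = univ) (n : ℕ) (x : X) :
    ∃ w : List ι, w.length = n ∧ x ∈ wordCylinder T u w := by
  induction n generalizing x with
  | zero => exact ⟨[], rfl, mem_univ x⟩
  | succ n ih =>
    obtain ⟨w, hw, hxw⟩ := ih (T x)
    obtain ⟨a, ha⟩ := mem_iUnion.1 (hu ▸ mem_univ x)
    exact ⟨a :: w, congrArg _ hw, ha, hxw⟩

/-- The minimal number of cylinders of length `n` needed to cover `Z`. -/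
noncomputable def wordCoverNum (T : X → X) (u : ι → Set X) (n : ℕ) (Z : Set X) : ℕ :=
  sInf {m | ∃ S : Finset (List ι), (∀ w ∈ S, w.length = n) ∧
    Z ⊆ cylinderUnion T u S ∧ S.card = m}

lemma wordCoverNum_le_card {n : ℕ} {Z : Set X} {S : Finset (List ι)}
    (hS : ∀ w ∈ S, w.length = n) (hZ : Z ⊆ cylinderUnion T u S) :
    wordCoverNum T u n Z ≤ S.card :=
  Nat.sInf_le ⟨S, hS, hZ, rfl⟩

lemma exists_card_eq_wordCoverNum [Finite ι] (hu : ⋃ a, u a = univ) (n : ℕ) (Z : Set X) :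
    ∃ S : Finset (List ι), (∀ w ∈ S, w.length = n) ∧ Z ⊆ cylinderUnion T u S ∧
      S.card = wordCoverNum T u n Z := by
  have hfin : {w : List ι | w.length = n}.Finite := List.finite_length_eq ι n
  have hne : {m | ∃ S : Finset (List ι), (∀ w ∈ S, w.length = n) ∧
      Z ⊆ cylinderUnion T u S ∧ S.card = m}.Nonempty := by
    refine ⟨_, hfin.toFinset, fun w hw => hfin.mem_toFinset.1 hw, fun x _ => ?_, rfl⟩
    obtain ⟨w, hw, hxw⟩ := exists_mem_wordCylinder (T := T) hu n x
    exact mem_cylinderUnion.2 ⟨w, hfin.mem_toFinset.2 hw, hxw⟩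
  exact Nat.sInf_mem hne

end Words

section ExitCount

variable {T : X → X} {W : Set X}

/-- The number of times `i < n` at which the orbit of `x` lies outside `W`. -/
noncomputable def exitCount (T : X → X) (W : Set X) (n : ℕ) (x : X) : ℕ :=
  birkhoffSum T (Wᶜ.indicator 1) n x

lemma exitCount_le_exitCount_add (m n : ℕ) (x : X) :
    exitCount T W n (T^[m] x) ≤ exitCount T W (m + n) x := by
  rw [exitCount, exitCount, birkhoffSum_add]
  exact Nat.le_add_left _ _

lemma exitCount_succ_of_notMem {x : X} (hx : x ∉ W) (n : ℕ) :
    exitCount T W (n + 1) x = exitCount T W n (T x) + 1 := by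
  rw [exitCount, birkhoffSum_succ', indicator_of_mem (mem_compl hx), Pi.one_apply, add_comm]
  rfl

lemma measurable_exitCount [MeasurableSpace X] (hT : Measurable T) (hW : MeasurableSet W)
    (n : ℕ) : Measurable (exitCount T W n) := by
  unfold exitCount birkhoffSum
  exact Finset.measurable_sum _ fun k _ =>
    (measurable_one.indicator hW.compl).comp (hT.iterate k)

lemma lintegral_exitCount [MeasurableSpace X] {μ : Measure X} (hT : MeasurePreserving T μ μ)
    (hW : MeasurableSet W) (n : ℕ) :
    ∫⁻ x, (exitCount T W n x : ENNReal) ∂μ = n * μ Wᶜ := by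
  have hterm (k : ℕ) (x : X) : ((Wᶜ.indicator (1 : X → ℕ) (T^[k] x) : ℕ) : ENNReal)
      = (T^[k] ⁻¹' Wᶜ).indicator 1 x := by
    by_cases hx : T^[k] x ∈ W <;> simp [hx, indicator]
  simp only [exitCount, birkhoffSum, Nat.cast_sum, hterm]
  rw [lintegral_finsetSum _ fun k _ =>
    measurable_one.indicator ((hT.iterate k).measurable hW.compl)]
  simp only [lintegral_indicator_one ((hT.iterate _).measurable hW.compl),
    (hT.iterate _).measure_preimage hW.compl.nullMeasurableSet, Finset.sum_const,
    Finset.card_range, nsmul_eq_mul]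

/-- The points whose first `n` iterates lie outside `W` with frequency at most `1 / K`. -/
def rareExits (T : X → X) (W : Set X) (K n : ℕ) : Set X :=
  {x | K * exitCount T W n x ≤ n}

lemma measurableSet_rareExits [MeasurableSpace X] (hT : Measurable T) (hW : MeasurableSet W)
    (K n : ℕ) : MeasurableSet (rareExits T W K n) :=
  measurableSet_le ((measurable_exitCount hT hW n).const_mul K) measurable_const

end ExitCount

section Counting

lemma tsum_list_prod_map {β : Type*} [Fintype β] (p : β → ENNReal) :
    ∑' l : List β, (l.map p).prod = (1 - ∑ b, p b)⁻¹ := by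
  rw [← List.equivSigmaTuple.symm.tsum_eq, ENNReal.tsum_sigma', ← ENNReal.tsum_geometric]
  refine tsum_congr fun n => ?_
  simp only [List.equivSigmaTuple, Equiv.coe_fn_symm_mk, List.map_ofFn, List.prod_ofFn,
    Function.comp_apply, tsum_fintype, Fintype.sum_pow]

variable {ι : Type*} {T : X → X} {u : ι → Set X} {g : Finset (List ι)}

/-- The words into which orbits are parsed: members of `g`, and single letters wherever no
member of `g` applies. -/
def blockWord (g : Finset (List ι)) : g ⊕ ι → List ι :=
  Sum.elim Subtype.val fun a => [a]

lemma exists_parsing (hg : [] ∉ g) {L : ℕ} (hL : ∀ w ∈ g, w.length ≤ L)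
    (hu : ⋃ a, u a = univ) (n : ℕ) (x : X) :
    ∃ l : List (g ⊕ ι), x ∈ wordCylinder T u (l.flatMap (blockWord g)) ∧
      n ≤ (l.flatMap (blockWord g)).length ∧ (l.flatMap (blockWord g)).length ≤ n + L ∧
      l.countP Sum.isRight ≤ exitCount T (cylinderUnion T u g) n x := by
  induction n using Nat.strong_induction_on generalizing x with
  | _ n ih =>
    rcases n with _ | n
    · exact ⟨[], mem_univ x, le_rfl, Nat.zero_le _, Nat.zero_le _⟩
    by_cases hx : x ∈ cylinderUnion T u g
    · obtain ⟨w, hwg, hxw⟩ := mem_cylinderUnion.1 hx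
      have hw : 0 < w.length := List.length_pos_iff.2 (ne_of_mem_of_not_mem hwg hg)
      rcases le_total (n + 1) w.length with hnw | hnw
      · have hword : [.inl ⟨w, hwg⟩].flatMap (blockWord g) = w := List.append_nil w
        refine ⟨[.inl ⟨w, hwg⟩], ?_, ?_, ?_, ?_⟩
        · rwa [hword]
        · rwa [hword]
        · rw [hword]
          exact (hL w hwg).trans (Nat.le_add_left _ _)
        · exact Nat.zero_le _
      obtain ⟨l, hxl, hnl, hlL, hl⟩ := ih (n + 1 - w.length) (by omega) (T^[w.length] x)
      have hexit := exitCount_le_exitCount_add (T := T) (W := cylinderUnion T u g)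
        w.length (n + 1 - w.length) x
      rw [Nat.add_sub_cancel' hnw] at hexit
      have hlen : ((.inl ⟨w, hwg⟩ :: l).flatMap (blockWord g)).length
          = w.length + (l.flatMap (blockWord g)).length := List.length_append
      refine ⟨.inl ⟨w, hwg⟩ :: l, ?_, by omega, by omega, by simpa using hl.trans hexit⟩
      exact (wordCylinder_append w (l.flatMap (blockWord g))).symm ▸ ⟨hxw, hxl⟩
    · obtain ⟨a, ha⟩ := mem_iUnion.1 (hu ▸ mem_univ x)
      obtain ⟨l, hxl, hnl, hlL, hl⟩ := ih n n.lt_succ_self (T x)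
      have hlen : ((.inr a :: l).flatMap (blockWord g)).length
          = (l.flatMap (blockWord g)).length + 1 := rfl
      refine ⟨.inr a :: l, ⟨ha, hxl⟩, by omega, by omega, ?_⟩
      rw [exitCount_succ_of_notMem hx, List.countP_cons_of_pos (by simp)]
      exact Nat.succ_le_succ hl

/-- The weight of a block; letters pay the extra factor `q`. -/
noncomputable def blockWeight (g : Finset (List ι)) (r q : ENNReal) : g ⊕ ι → ENNReal :=
  Sum.elim (fun w => r ^ w.1.length) fun _ => r * q

lemma prod_map_blockWeight (r q : ENNReal) (l : List (g ⊕ ι)) :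
    (l.map (blockWeight g r q)).prod
      = r ^ (l.flatMap (blockWord g)).length * q ^ l.countP Sum.isRight := by
  induction l with
  | nil => simp only [List.map_nil, List.prod_nil, List.flatMap_nil, List.length_nil, pow_zero,
      List.countP_nil, mul_one]
  | cons b l ih =>
    rw [List.map_cons, List.prod_cons, ih, List.flatMap_cons, List.length_append, pow_add]
    rcases b with w | a
    · rw [List.countP_cons_of_neg (by simp)]
      exact (mul_assoc _ _ _).symm
    · rw [List.countP_cons_of_pos (by simp), pow_succ']
      simp only [blockWeight, blockWord, Sum.elim_inr, List.length_singleton, pow_one]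
      ring

lemma sum_blockWeight_le [Fintype ι] {r q : ENNReal} (hr : r ≤ 1)
    (hq : Fintype.card ι * q ≤ 4⁻¹) (hprice : ∑ w ∈ g, r ^ w.length ≤ 2⁻¹) :
    ∑ b, blockWeight g r q b ≤ 2⁻¹ + 4⁻¹ := by
  rw [Fintype.sum_sum_type]
  refine add_le_add ((Finset.sum_coe_sort g fun w => r ^ w.length).trans_le hprice) ?_
  calc ∑ _ : ι, r * q = Fintype.card ι * (r * q) := by
        rw [Finset.sum_const, Finset.card_univ, nsmul_eq_mul]
    _ ≤ Fintype.card ι * q := by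
        gcongr
        exact mul_le_of_le_one_left' hr
    _ ≤ 4⁻¹ := hq

lemma tsum_prod_map_blockWeight_le [Fintype ι] {r q : ENNReal} (hr : r ≤ 1)
    (hq : Fintype.card ι * q ≤ 4⁻¹) (hprice : ∑ w ∈ g, r ^ w.length ≤ 2⁻¹) :
    ∑' l : List (g ⊕ ι), (l.map (blockWeight g r q)).prod ≤ 4 := by
  have hquarter : (4 : ENNReal)⁻¹ = 1 - (2⁻¹ + 4⁻¹) := by
    refine ENNReal.eq_sub_of_add_eq (by simp) ?_
    rw [← ENNReal.toReal_eq_toReal_iff' (by simp) (by simp)]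
    norm_num [ENNReal.toReal_add]
  rw [tsum_list_prod_map, ENNReal.inv_le_iff_inv_le, hquarter]
  exact tsub_le_tsub_left (sum_blockWeight_le hr hq hprice) 1

/-- Each parsing has weight at least `r ^ (n + L) * q ^ k`, and all the weights together sum to
at most `4`. -/
lemma wordCoverNum_exitCount_le [Fintype ι] (hu : ⋃ a, u a = univ) {r q : ENNReal}
    (hr₀ : r ≠ 0) (hr : r ≤ 1) (hq₀ : q ≠ 0) (hq₁ : q ≤ 1) (hq : Fintype.card ι * q ≤ 4⁻¹)
    (hg : [] ∉ g) (hprice : ∑ w ∈ g, r ^ w.length ≤ 2⁻¹) {L : ℕ}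
    (hL : ∀ w ∈ g, w.length ≤ L) (n k : ℕ) :
    wordCoverNum T u n {x | exitCount T (cylinderUnion T u g) n x ≤ k}
      * (r ^ (n + L) * q ^ k) ≤ 4 := by
  classical
  have hc : r ^ (n + L) * q ^ k ≠ 0 := mul_ne_zero (pow_ne_zero _ hr₀) (pow_ne_zero _ hq₀)
  obtain ⟨hfin, hcard⟩ := ENNReal.finset_card_const_le_le_of_tsum_le (by simp)
    (tsum_prod_map_blockWeight_le hr hq hprice) hc
  set P : Finset (List (g ⊕ ι)) := hfin.toFinset
  set S : Finset (List ι) :=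
    (P.image fun l => (l.flatMap (blockWord g)).take n).filter fun w => w.length = n
  have hcover : {x | exitCount T (cylinderUnion T u g) n x ≤ k} ⊆ cylinderUnion T u S := by
    intro x hx
    obtain ⟨l, hxl, hnl, hlL, hl⟩ := exists_parsing hg hL hu n x
    have hlP : l ∈ P := by
      rw [hfin.mem_toFinset, mem_ofPred_eq, prod_map_blockWeight]
      exact mul_le_mul' (pow_le_pow_right_of_le_one' hr hlL)
        (pow_le_pow_right_of_le_one' hq₁ (hl.trans hx))
    refine mem_cylinderUnion.2 ⟨_, Finset.mem_filter.2 ⟨Finset.mem_image_of_mem _ hlP, ?_⟩,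
      wordCylinder_subset_take _ n hxl⟩
    exact List.length_take_of_le hnl
  have hSP : wordCoverNum T u n {x | exitCount T (cylinderUnion T u g) n x ≤ k} ≤ P.card :=
    (wordCoverNum_le_card (fun w hw => (Finset.mem_filter.1 hw).2) hcover).trans
      ((Finset.card_filter_le _ _).trans Finset.card_image_le)
  calc _ ≤ (P.card : ENNReal) * (r ^ (n + L) * q ^ k) := by gcongr
    _ ≤ 4 := ENNReal.mul_le_of_le_div hcard

lemma exists_forall_eventually_mul_pow_le {r r' q C : ENNReal} (hr : r ≠ ⊤) (hr' : r' < r)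
    (hq : q ≠ 0) (hC : C ≠ ⊤) :
    ∃ K > 0, ∀ L : ℕ, ∀ᶠ n in atTop, C * r' ^ n ≤ r ^ (n + L) * q ^ (n / K) := by
  obtain ⟨r₁, hr'₁, hr₁⟩ := exists_between hr'
  have hr₀ : r ≠ 0 := hr'.ne_bot
  have hr₁₀ : r₁ ≠ 0 := hr'₁.ne_bot
  have hrat : r₁ / r < 1 := (ENNReal.div_lt_iff (.inl hr₀) (.inl hr)).2 (by rwa [one_mul])
  have hrat' : r' / r₁ < 1 :=
    (ENNReal.div_lt_iff (.inl hr₁₀) (.inl hr₁.ne_top)).2 (by rwa [one_mul])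
  obtain ⟨K, hK, hK₀⟩ := (((ENNReal.tendsto_pow_atTop_nhds_zero_of_lt_one hrat).eventually
    (Iio_mem_nhds (pos_iff_ne_zero.2 hq))).and (eventually_gt_atTop 0)).exists
  refine ⟨K, hK₀, fun L => ?_⟩
  have hsmall : Tendsto (fun n => C * (r' / r₁) ^ n) atTop (𝓝 0) := by
    simpa using ENNReal.Tendsto.const_mul
      (ENNReal.tendsto_pow_atTop_nhds_zero_of_lt_one hrat') (.inr hC)
  filter_upwards [hsmall.eventually
    (Iio_mem_nhds (pos_iff_ne_zero.2 (pow_ne_zero L hr₀)))] with n hn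
  have hexits : (r₁ / r) ^ n ≤ q ^ (n / K) :=
    calc (r₁ / r) ^ n ≤ (r₁ / r) ^ (K * (n / K)) :=
          pow_le_pow_right_of_le_one' hrat.le (Nat.mul_div_le n K)
      _ = ((r₁ / r) ^ K) ^ (n / K) := pow_mul _ _ _
      _ ≤ q ^ (n / K) := by gcongr
  calc C * r' ^ n = C * (r' / r₁) ^ n * ((r₁ / r) ^ n * r ^ n) := by
        rw [← mul_pow, ENNReal.div_mul_cancel hr₀ hr, mul_assoc, ← mul_pow,
          ENNReal.div_mul_cancel hr₁₀ hr₁.ne_top]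
    _ ≤ r ^ L * (q ^ (n / K) * r ^ n) := by gcongr
    _ = r ^ (n + L) * q ^ (n / K) := by ring

lemma exists_forall_eventually_wordCoverNum_le [Finite ι] (hu : ⋃ a, u a = univ)
    {r r' : ENNReal} (hr : r ≤ 1) (hr' : r' < r) :
    ∃ K : ℕ, ∀ g : Finset (List ι), ∑ w ∈ g, r ^ w.length ≤ 2⁻¹ →
      ∀ᶠ n in atTop,
        wordCoverNum T u n (rareExits T (cylinderUnion T u g) K n) * r' ^ n ≤ 1 := by
  have := Fintype.ofFinite ι
  set q : ENNReal := 4⁻¹ * (Fintype.card ι + 1 : ENNReal)⁻¹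
  have hinv : (Fintype.card ι + 1 : ENNReal)⁻¹ ≤ 1 := ENNReal.inv_le_one.2 le_add_self
  have hq₀ : q ≠ 0 := by simp [q]
  have hq₁ : q ≤ 1 := mul_le_one' (ENNReal.inv_le_one.2 (by norm_num)) hinv
  have hq : Fintype.card ι * q ≤ 4⁻¹ :=
    calc Fintype.card ι * q ≤ (Fintype.card ι + 1) * q := by gcongr; exact le_self_add
      _ = 4⁻¹ * ((Fintype.card ι + 1) * (Fintype.card ι + 1 : ENNReal)⁻¹) := mul_left_comm _ _ _
      _ ≤ 4⁻¹ := mul_le_of_le_one_right' (ENNReal.mul_inv_le_one _)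
  obtain ⟨K, hK₀, hK⟩ := exists_forall_eventually_mul_pow_le (C := 4)
    (ne_top_of_le_ne_top ENNReal.one_ne_top hr) hr' hq₀ (by simp)
  refine ⟨K, fun g hprice => ?_⟩
  have hg : [] ∉ g := fun hnil => ENNReal.one_half_lt_one.not_ge <|
    calc (1 : ENNReal) = r ^ ([] : List ι).length := (pow_zero r).symm
      _ ≤ ∑ w ∈ g, r ^ w.length :=
        Finset.single_le_sum_of_canonicallyOrdered (f := fun w : List ι => r ^ w.length) hnil
      _ ≤ 2⁻¹ := hprice
  filter_upwards [hK (g.sup List.length)] with n hn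
  have hcount := wordCoverNum_exitCount_le (T := T) hu hr'.ne_bot hr hq₀ hq₁ hq hg hprice
    (fun w hw => Finset.le_sup (f := List.length) hw) n (n / K)
  simp only [Nat.le_div_iff_mul_le hK₀, mul_comm _ K] at hcount
  have hfour := (mul_le_mul_right hn _).trans hcount
  rw [mul_left_comm] at hfour
  exact (ENNReal.mul_le_mul_iff_right (by simp) (by simp)).1 (hfour.trans_eq (mul_one 4).symm)

end Counting

section CylinderNull

variable {ι : Type*} {T : X → X} {u : ι → Set X} {r : ENNReal} {Z : Set X}

/-- Nullity for the outer measure of Carathéodory type, due to Bowen, in which a cylinder of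
length `n` costs `r ^ n`; with `r = e⁻ˢ` these are the sets charged nothing in dimension `s`. -/
def IsCylinderNull (T : X → X) (u : ι → Set X) (r : ENNReal) (Z : Set X) : Prop :=
  ∀ η : ENNReal, η ≠ 0 → ∃ G : Set (List ι), Z ⊆ cylinderUnion T u G ∧
    ∑' w : G, r ^ w.1.length ≤ η

lemma IsCylinderNull.mono {Z' : Set X} (hZ : IsCylinderNull T u r Z) (h : Z' ⊆ Z) :
    IsCylinderNull T u r Z' := fun η hη =>
  let ⟨G, hG, hprice⟩ := hZ η hη
  ⟨G, h.trans hG, hprice⟩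

lemma isCylinderNull_iUnion {κ : Type*} [Countable κ] {Z : κ → Set X}
    (hZ : ∀ k, IsCylinderNull T u r (Z k)) : IsCylinderNull T u r (⋃ k, Z k) := by
  intro η hη
  obtain ⟨η', hη', hsum⟩ := ENNReal.exists_pos_sum_of_countable' hη κ
  choose G hG hprice using fun k => hZ k (η' k) (hη' k).ne'
  refine ⟨⋃ k, G k, ?_, ?_⟩
  · rw [cylinderUnion_iUnion]
    exact iUnion_mono hG
  · exact (ENNReal.tsum_iUnion_le_tsum (fun w : List ι => r ^ w.length) G).trans
      ((ENNReal.tsum_le_tsum hprice).trans hsum.le)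

lemma IsCylinderNull.inter_preimage (hr : r ≤ 1) (hZ : IsCylinderNull T u r Z) (a : ι) :
    IsCylinderNull T u r (u a ∩ T ⁻¹' Z) := by
  intro η hη
  obtain ⟨G, hG, hprice⟩ := hZ η hη
  refine ⟨List.cons a '' G, fun x ⟨hxa, hxZ⟩ => ?_, ?_⟩
  · obtain ⟨w, hw, hxw⟩ := mem_cylinderUnion.1 (hG hxZ)
    exact mem_cylinderUnion.2 ⟨a :: w, mem_image_of_mem _ hw, hxa, hxw⟩
  · rw [tsum_image (fun w : List ι => r ^ w.length) (List.cons_injective.injOn)]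
    refine (ENNReal.tsum_le_tsum fun w => ?_).trans hprice
    exact pow_le_pow_right_of_le_one' hr (Nat.le_succ _)

lemma IsCylinderNull.preimage [Countable ι] (hu : ⋃ a, u a = univ) (hr : r ≤ 1)
    (hZ : IsCylinderNull T u r Z) : IsCylinderNull T u r (T ⁻¹' Z) := by
  refine (isCylinderNull_iUnion fun a => hZ.inter_preimage hr a).mono ?_
  rw [← iUnion_inter, hu, univ_inter]

lemma IsCylinderNull.iUnion_preimage_iterate [Countable ι] (hu : ⋃ a, u a = univ) (hr : r ≤ 1)
    (hZ : IsCylinderNull T u r Z) : IsCylinderNull T u r (⋃ j : ℕ, T^[j] ⁻¹' Z) := by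
  refine isCylinderNull_iUnion fun j => ?_
  induction j with
  | zero => exact hZ
  | succ j ih => exact ih.preimage hu hr

lemma exists_subset_cylinderUnion_tsum_eq [Finite ι] (hu : ⋃ a, u a = univ) (r : ENNReal)
    (n : ℕ) (Z : Set X) :
    ∃ G : Set (List ι), Z ⊆ cylinderUnion T u G ∧
      ∑' w : G, r ^ w.1.length = wordCoverNum T u n Z * r ^ n := by
  obtain ⟨S, hlen, hcover, hcard⟩ := exists_card_eq_wordCoverNum (T := T) hu n Z
  refine ⟨S, hcover, ?_⟩
  calc ∑' w : (S : Set (List ι)), r ^ w.1.length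
      = ∑ w ∈ S, r ^ w.length := Finset.tsum_subtype S fun w => r ^ w.length
    _ = ∑ _w ∈ S, r ^ n := Finset.sum_congr rfl fun w hw => by rw [hlen w hw]
    _ = wordCoverNum T u n Z * r ^ n := by rw [Finset.sum_const, hcard, nsmul_eq_mul]

lemma isCylinderNull_limsup [Finite ι] (hu : ⋃ a, u a = univ) {ρ : ENNReal}
    (hr : r < ρ) (hρ : ρ ≠ ⊤) {Z : ℕ → Set X}
    (hZ : ∀ᶠ n in atTop, wordCoverNum T u n (Z n) * ρ ^ n ≤ 1) :
    IsCylinderNull T u r (limsup Z atTop) := by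
  intro η hη
  choose G hcover hprice using fun n => exists_subset_cylinderUnion_tsum_eq (T := T) hu r n (Z n)
  have ht : r / ρ < 1 :=
    (ENNReal.div_lt_iff (.inl hr.ne_bot) (.inl hρ)).2 (by rwa [one_mul])
  have htail : Tendsto (fun m => (r / ρ) ^ m * (1 - r / ρ)⁻¹) atTop (𝓝 0) := by
    simpa using ENNReal.Tendsto.mul_const (ENNReal.tendsto_pow_atTop_nhds_zero_of_lt_one ht)
      (.inr (ENNReal.inv_ne_top.2 (tsub_pos_of_lt ht).ne'))
  obtain ⟨m, hm, hZm⟩ := ((htail.eventually (Iio_mem_nhds (pos_iff_ne_zero.2 hη))).and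
    (eventually_forall_ge_atTop.2 hZ)).exists
  have hlevel (n : ℕ) (hn : m ≤ n) : ∑' w : G n, r ^ w.1.length ≤ (r / ρ) ^ n :=
    calc ∑' w : G n, r ^ w.1.length = wordCoverNum T u n (Z n) * ρ ^ n * (r / ρ) ^ n := by
          rw [hprice, mul_assoc, ← mul_pow, ENNReal.mul_div_cancel hr.ne_bot hρ]
      _ ≤ (r / ρ) ^ n := mul_le_of_le_one_left' (hZm n hn)
  refine ⟨⋃ k, G (m + k), fun x hx => ?_, ?_⟩
  · obtain ⟨n, hn, hxn⟩ := frequently_atTop.1 (mem_limsup_iff_frequently_mem.1 hx) m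
    obtain ⟨k, rfl⟩ := Nat.exists_eq_add_of_le hn
    exact cylinderUnion_mono (subset_iUnion _ k) (hcover _ hxn)
  · calc ∑' w : ⋃ k, G (m + k), r ^ w.1.length
        ≤ ∑' k, ∑' w : G (m + k), r ^ w.1.length :=
          ENNReal.tsum_iUnion_le_tsum (fun w : List ι => r ^ w.length) _
      _ ≤ ∑' k, (r / ρ) ^ (m + k) :=
          ENNReal.tsum_le_tsum fun k => hlevel _ (Nat.le_add_right m k)
      _ = (r / ρ) ^ m * (1 - r / ρ)⁻¹ := by
          simp only [pow_add, ENNReal.tsum_mul_left, ENNReal.tsum_geometric]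
      _ ≤ η := hm.le

end CylinderNull

section Recurrence

variable [MeasurableSpace X] {T : X → X} {μ : Measure X}

lemma le_measure_limsup [IsFiniteMeasure μ] {A : ℕ → Set X} (hA : ∀ n, MeasurableSet (A n))
    {c : ENNReal} (hc : ∃ᶠ n in atTop, c ≤ μ (A n)) : c ≤ μ (limsup A atTop) := by
  have hanti : Antitone fun N => ⋃ n ≥ N, A n := fun M N hMN =>
    biUnion_subset_biUnion_left fun n hn => le_trans hMN hn
  have hlim : limsup A atTop = ⋂ N, ⋃ n ≥ N, A n := limsup_eq_iInf_iSup_of_nat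
  rw [hlim, hanti.measure_iInter (fun N => (MeasurableSet.biUnion (to_countable _)
    fun n _ => hA n).nullMeasurableSet) ⟨0, measure_ne_top _ _⟩]
  refine le_iInf fun N => ?_
  obtain ⟨n, hn, hcn⟩ := frequently_atTop.1 hc N
  exact hcn.trans (measure_mono (subset_biUnion_of_mem (u := A) hn))

lemma measure_compl_iUnion_preimage_iterate [IsFiniteMeasure μ] (hμ : Ergodic T μ) {Z : Set X}
    (hZ : MeasurableSet Z) (hμZ : μ Z ≠ 0) : μ (⋃ j : ℕ, T^[j] ⁻¹' Z)ᶜ = 0 := by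
  set V : Set X := ⋃ j : ℕ, T^[j] ⁻¹' Z
  have hV : MeasurableSet V := MeasurableSet.iUnion fun j => (hμ.measurable.iterate j) hZ
  have hTV : T ⁻¹' V ⊆ V := by
    rw [preimage_iUnion]
    exact iUnion_subset fun j => subset_iUnion (fun j : ℕ => T^[j] ⁻¹' Z) (j + 1)
  rcases hμ.ae_empty_or_univ_of_preimage_ae_le hV.nullMeasurableSet hTV.eventuallyLE with h | h
  · exact absurd (measure_mono_null (subset_iUnion _ 0) (ae_eq_empty.1 h)) hμZ
  · exact ae_eq_univ.1 h

lemma two_inv_le_measure_rareExits [IsProbabilityMeasure μ] (hT : MeasurePreserving T μ μ)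
    {W : Set X} (hW : MeasurableSet W) {K : ℕ} (hK : K * μ Wᶜ ≤ 2⁻¹) {n : ℕ} (hn : n ≠ 0) :
    2⁻¹ ≤ μ (rareExits T W K n) := by
  have hexit : Measurable fun x => (exitCount T W n x : ENNReal) :=
    measurable_from_top.comp (measurable_exitCount hT.measurable hW n)
  have hn₀ : (n : ENNReal) ≠ 0 := Nat.cast_ne_zero.2 hn
  have hmarkov : μ (rareExits T W K n)ᶜ ≤ 2⁻¹ :=
    calc μ (rareExits T W K n)ᶜ ≤ μ {x | (n : ENNReal) ≤ K * exitCount T W n x} :=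
          measure_mono fun x (hx : ¬K * exitCount T W n x ≤ n) =>
            show (n : ENNReal) ≤ K * exitCount T W n x by exact_mod_cast (not_le.1 hx).le
      _ ≤ (∫⁻ x, K * exitCount T W n x ∂μ) / n :=
          meas_ge_le_lintegral_div (hexit.const_mul _).aemeasurable hn₀ (ENNReal.natCast_ne_top n)
      _ = K * μ Wᶜ := by
          rw [lintegral_const_mul _ hexit, lintegral_exitCount hT hW, mul_left_comm, mul_comm,
            ENNReal.mul_div_cancel_right hn₀ (ENNReal.natCast_ne_top n)]
      _ ≤ 2⁻¹ := hK
  have hmeas : MeasurableSet (rareExits T W K n) := measurableSet_rareExits hT.measurable hW K n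
  rw [← compl_compl (rareExits T W K n), prob_compl_eq_one_sub hmeas.compl,
    ← ENNReal.one_sub_inv_two]
  exact tsub_le_tsub_left hmarkov 1

end Recurrence

section Measures

variable [MeasurableSpace X]

lemma isExtreme_setOf_le_measure {A : Set (Measure X)} {s : Set X} {c : ENNReal} (hc : c ≠ ⊤)
    (hA : ∀ ν ∈ A, ν s ≤ c) : IsExtreme ENNReal A {ν ∈ A | c ≤ ν s} := by
  refine ⟨fun ν hν => hν.1, ?_⟩
  rintro μ₁ hμ₁ μ₂ hμ₂ _ ⟨-, hle⟩ ⟨a, b, ha, -, hab, rfl⟩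
  have ha' : a ≠ ⊤ := fun h => by simp [h] at hab
  have hb' : b ≠ ⊤ := fun h => by simp [h] at hab
  refine ⟨hμ₁, not_lt.1 fun hlt => hle.not_gt ?_⟩
  calc (a • μ₁ + b • μ₂) s = a * μ₁ s + b * μ₂ s := by
        simp only [Measure.add_apply, Measure.smul_apply, smul_eq_mul]
    _ < a * c + b * c := ENNReal.add_lt_add_of_lt_of_le
        (ENNReal.mul_ne_top hb' ((hA μ₂ hμ₂).trans_lt hc.lt_top).ne)
        ((ENNReal.mul_lt_mul_iff_right ha.ne' ha').2 hlt) (mul_le_mul_right (hA μ₂ hμ₂) b)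
    _ = c := by rw [← add_mul, hab, one_mul]

/-- The `T`-invariant probability measures, as a subset of the space of probability measures, so
that it carries the topology of weak convergence. -/
def invariantMeasures (T : X → X) : Set (ProbabilityMeasure X) :=
  {ν | MeasurePreserving T (ν : Measure X) ν}

/-- The uniform distribution on the orbit segment `x, T x, …, Tⁿ⁻¹ x`; it is the zero measure if
`n = 0`. -/
noncomputable def empiricalMeasure (T : X → X) (n : ℕ) (x : X) : Measure X :=
  (n : ENNReal)⁻¹ • ∑ i ∈ Finset.range n, Measure.dirac (T^[i] x)

variable {T : X → X}

lemma isProbabilityMeasure_empiricalMeasure {n : ℕ} (hn : n ≠ 0) (x : X) :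
    IsProbabilityMeasure (empiricalMeasure T n x) := by
  constructor
  simp only [empiricalMeasure, Measure.smul_apply, Measure.finsetSum_apply, smul_eq_mul,
    measure_univ, Finset.sum_const, Finset.card_range, nsmul_eq_mul, mul_one]
  exact ENNReal.inv_mul_cancel (Nat.cast_ne_zero.2 hn) (ENNReal.natCast_ne_top n)

lemma empiricalMeasure_compl {W : Set X} (hW : MeasurableSet W) (n : ℕ) (x : X) :
    empiricalMeasure T n x Wᶜ = (n : ENNReal)⁻¹ * exitCount T W n x := by
  simp only [empiricalMeasure, exitCount, birkhoffSum, Measure.smul_apply,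
    Measure.finsetSum_apply, Measure.dirac_apply' _ hW.compl, smul_eq_mul, Nat.cast_sum]
  congr! 2 with i
  by_cases hi : T^[i] x ∈ W <;> simp [hi]

lemma inv_le_empiricalMeasure_compl {W : Set X} (hW : MeasurableSet W) {K n : ℕ} {x : X}
    (hn : n ≠ 0) (hx : x ∉ rareExits T W K n) :
    (K : ENNReal)⁻¹ ≤ empiricalMeasure T n x Wᶜ := by
  have hlt : n < K * exitCount T W n x := not_le.1 hx
  have hK : (K : ENNReal) ≠ 0 := Nat.cast_ne_zero.2 fun h => by simp [h] at hlt
  rw [empiricalMeasure_compl hW, ENNReal.inv_le_iff_le_mul (fun _ => by simp [hK])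
    (fun h => absurd h (ENNReal.natCast_ne_top K)), mul_left_comm, ← ENNReal.div_eq_inv_mul,
    ENNReal.le_div_iff_mul_le (.inl (Nat.cast_ne_zero.2 hn)) (.inl (ENNReal.natCast_ne_top n)),
    one_mul]
  exact_mod_cast hlt.le

lemma integral_empiricalMeasure {f : X → ℝ} (hf : StronglyMeasurable f) (n : ℕ) (x : X) :
    ∫ y, f y ∂empiricalMeasure T n x = birkhoffAverage ℝ T f n x := by
  rw [empiricalMeasure, integral_smul_measure,
    integral_finsetSum_measure fun i _ => integrable_dirac' hf (by simp)]
  simp only [integral_dirac' _ _ hf, birkhoffAverage, birkhoffSum, ENNReal.toReal_inv,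
    ENNReal.toReal_natCast]

end Measures

section InvariantMeasures

variable [TopologicalSpace X] [HasOuterApproxClosed X] [MeasurableSpace X] [BorelSpace X]
  {T : X → X}

lemma upperSemicontinuous_measure {F : Set X} (hF : IsClosed F) :
    UpperSemicontinuous fun ν : ProbabilityMeasure X => (ν : Measure X) F := fun _ =>
  upperSemicontinuousAt_iff_limsup_le.2
    (ProbabilityMeasure.limsup_measure_closed_le_of_tendsto tendsto_id hF)

lemma isClosed_invariantMeasures (hT : Continuous T) : IsClosed (invariantMeasures T) := by
  convert isClosed_eq (ProbabilityMeasure.continuous_map hT) continuous_id using 1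
  ext ν
  exact ⟨fun h => Subtype.ext h.map_eq, fun h => ⟨hT.measurable, congrArg Subtype.val h⟩⟩

lemma exists_mem_extremePoints_coe_image {B : Set (ProbabilityMeasure X)} (hB : IsCompact B)
    (hne : B.Nonempty) :
    ∃ μ ∈ B, (μ : Measure X) ∈ extremePoints ENNReal ((↑) '' B : Set (Measure X)) := by
  let Φ (ν : ProbabilityMeasure X) (f : BoundedContinuousFunction X ℝ) : ℝ :=
    ∫ x, f x ∂(ν : Measure X)
  have hΦ : Continuous Φ := continuous_pi fun f =>
    ProbabilityMeasure.continuous_iff_forall_continuous_integral.1 continuous_id f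
  obtain ⟨_, ⟨μ, hμ, rfl⟩, hext⟩ := (hB.image hΦ).extremePoints_nonempty (hne.image Φ)
  refine ⟨μ, hμ, mem_image_of_mem _ hμ, ?_⟩
  rintro _ ⟨μ₁, hμ₁, rfl⟩ _ ⟨μ₂, hμ₂, rfl⟩ ⟨a, b, ha, hb, hab, hμab⟩
  have ha' : a ≠ ⊤ := fun h => by simp [h] at hab
  have hb' : b ≠ ⊤ := fun h => by simp [h] at hab
  have hseg : Φ μ ∈ openSegment ℝ (Φ μ₁) (Φ μ₂) := by
    refine ⟨a.toReal, b.toReal, ENNReal.toReal_pos ha.ne' ha', ENNReal.toReal_pos hb.ne' hb',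
      by rw [← ENNReal.toReal_add ha' hb', hab, ENNReal.toReal_one], funext fun f => ?_⟩
    simp only [Φ, Pi.add_apply, Pi.smul_apply, ← hμab]
    rw [integral_add_measure ((f.integrable _).smul_measure ha')
      ((f.integrable _).smul_measure hb'), integral_smul_measure, integral_smul_measure]
  exact ext_of_forall_integral_eq_of_IsFiniteMeasure fun f => congrFun
    (hext (mem_image_of_mem Φ hμ₁) (mem_image_of_mem Φ hμ₂) hseg) f

lemma mem_invariantMeasures_of_tendsto_empiricalMeasure (hT : Continuous T) {κ : Type*}
    {l : Filter κ} [l.NeBot] {n : κ → ℕ} (hn : Tendsto n l atTop) {x : κ → X}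
    {ν : κ → ProbabilityMeasure X}
    (hν : ∀ᶠ k in l, (ν k : Measure X) = empiricalMeasure T (n k) (x k))
    {ρ : ProbabilityMeasure X} (hρ : Tendsto ν l (𝓝 ρ)) : ρ ∈ invariantMeasures T := by
  refine ⟨hT.measurable, ?_⟩
  have := Measure.isProbabilityMeasure_map (μ := (ρ : Measure X)) hT.measurable.aemeasurable
  refine ext_of_forall_integral_eq_of_IsFiniteMeasure fun f => ?_
  rw [integral_map hT.measurable.aemeasurable f.continuous.aestronglyMeasurable, ← sub_eq_zero]
  have hint := ProbabilityMeasure.tendsto_iff_forall_integral_tendsto.1 hρ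
  refine tendsto_nhds_unique ((hint (f.compContinuous ⟨T, hT⟩)).sub (hint f)) ?_
  have hbound : ∀ᶠ k in l, ‖∫ y, f (T y) ∂(ν k : Measure X) - ∫ y, f y ∂(ν k : Measure X)‖
      ≤ 2 * ‖f‖ / n k := by
    filter_upwards [hν] with k hk
    have hshift : birkhoffAverage ℝ T (fun y => f (T y)) (n k) (x k)
        = birkhoffAverage ℝ T f (n k) (T (x k)) := by
      simp only [birkhoffAverage, birkhoffSum, ← Function.iterate_succ_apply',
        Function.iterate_succ_apply]
    rw [hk, integral_empiricalMeasure (f := fun y => f (T y))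
        (f.continuous.comp hT).measurable.stronglyMeasurable,
      integral_empiricalMeasure f.continuous.measurable.stronglyMeasurable, hshift,
      ← dist_eq_norm, dist_birkhoffAverage_apply_birkhoffAverage]
    gcongr
    exact f.dist_le_two_norm _ _
  refine squeeze_zero_norm' hbound ?_
  exact (tendsto_const_nhds.div_atTop tendsto_natCast_atTop_atTop).comp hn

end InvariantMeasures

section CompactInvariantMeasures

variable [TopologicalSpace X] [CompactSpace X] [T2Space X] [HasOuterApproxClosed X]
  [MeasurableSpace X] [BorelSpace X] {T : X → X}

lemma exists_mem_invariantMeasures_le (hT : Continuous T) {n : ℕ → ℕ}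
    (hn : Tendsto n atTop atTop) (x : ℕ → X) :
    ∃ ρ ∈ invariantMeasures T, ∀ F, IsClosed F → ∀ c : ENNReal,
      (∀ᶠ j in atTop, c ≤ empiricalMeasure T (n j) (x j) F) → c ≤ (ρ : Measure X) F := by
  have : Nonempty (ProbabilityMeasure X) := ⟨⟨Measure.dirac (x 0), inferInstance⟩⟩
  let ν (j : ℕ) : ProbabilityMeasure X :=
    if h : n j = 0 then ⟨Measure.dirac (x j), inferInstance⟩
    else ⟨empiricalMeasure T (n j) (x j), isProbabilityMeasure_empiricalMeasure h (x j)⟩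
  have hν : ∀ᶠ j in atTop, (ν j : Measure X) = empiricalMeasure T (n j) (x j) := by
    filter_upwards [hn.eventually_ne_atTop 0] with j hj
    exact congrArg Subtype.val (dif_neg hj)
  have hle : (hyperfilter ℕ : Filter ℕ) ≤ atTop := Nat.hyperfilter_le_atTop
  have hρ : Tendsto ν (hyperfilter ℕ) (𝓝 ((hyperfilter ℕ).map ν).lim) :=
    ((hyperfilter ℕ).map ν).le_nhds_lim
  refine ⟨_, mem_invariantMeasures_of_tendsto_empiricalMeasure hT (hn.mono_left hle)
    (hle hν) hρ, fun F hF c hc => ?_⟩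
  refine le_trans ?_ (ProbabilityMeasure.limsup_measure_closed_le_of_tendsto hρ hF)
  refine le_limsup_of_frequently_le (Eventually.frequently (hle ?_))
  filter_upwards [hν, hc] with j hνj hcj
  rwa [hνj]

lemma invariantMeasures_nonempty [Nonempty X] (hT : Continuous T) :
    (invariantMeasures T).Nonempty :=
  let ⟨ρ, hρ, _⟩ := exists_mem_invariantMeasures_le hT tendsto_id fun _ => Classical.arbitrary X
  ⟨ρ, hρ⟩

lemma exists_mem_ergodicMeasures_measure_ge (hT : Continuous T)
    (hne : (invariantMeasures T).Nonempty) {F : Set X} (hF : IsClosed F) :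
    ∃ μ ∈ ergodicMeasures T, ∀ ν ∈ invariantMeasures T, (ν : Measure X) F ≤ μ F := by
  obtain ⟨ρ, hρ, hmax⟩ := UpperSemicontinuousOn.exists_isMaxOn hne
    (isClosed_invariantMeasures hT).isCompact
    ((upperSemicontinuous_measure hF).upperSemicontinuousOn _)
  let B : Set (ProbabilityMeasure X) :=
    {ν ∈ invariantMeasures T | (ρ : Measure X) F ≤ (ν : Measure X) F}
  have hB : IsCompact B := ((isClosed_invariantMeasures hT).inter
    ((upperSemicontinuous_measure hF).isClosed_preimage _)).isCompact
  obtain ⟨μ, hμ, hext⟩ := exists_mem_extremePoints_coe_image hB ⟨ρ, hρ, le_rfl⟩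
  let A : Set (Measure X) := {ν | MeasurePreserving T ν ν ∧ IsProbabilityMeasure ν}
  have himage : ((↑) '' B : Set (Measure X)) = {ν ∈ A | (ρ : Measure X) F ≤ ν F} := by
    ext ν
    constructor
    · rintro ⟨ν, hν, rfl⟩
      exact ⟨⟨hν.1, inferInstance⟩, hν.2⟩
    · rintro ⟨⟨hνT, hν⟩, hle⟩
      exact ⟨⟨ν, hν⟩, ⟨hνT, hle⟩, rfl⟩
  have hface : IsExtreme ENNReal A {ν ∈ A | (ρ : Measure X) F ≤ ν F} :=
    isExtreme_setOf_le_measure (measure_ne_top _ _) fun ν hν => hmax (a := ⟨ν, hν.2⟩) hν.1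
  rw [himage] at hext
  exact ⟨μ, ⟨inferInstance, .of_mem_extremePoints (hface.extremePoints_subset_extremePoints hext)⟩,
    fun ν hν => (hmax hν).trans hμ.2⟩

lemma exists_eventually_rareExits_eq_univ (hT : Continuous T) {W : ℕ → Set X}
    (hW : ∀ m, IsOpen (W m)) (hmono : Monotone W)
    (hinv : ∀ ν ∈ invariantMeasures T, (ν : Measure X) (⋃ m, W m)ᶜ = 0) (K : ℕ) :
    ∃ m, ∀ᶠ n in atTop, rareExits T (W m) K n = univ := by
  by_contra! hcon
  have hbad (m : ℕ) : ∃ n x, m < n ∧ x ∉ rareExits T (W m) K n := by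
    obtain ⟨n, hn, hne⟩ := ((hcon m).and_eventually (eventually_gt_atTop m)).exists
    obtain ⟨x, hx⟩ := (ne_univ_iff_exists_notMem _).1 hn
    exact ⟨n, x, hne, hx⟩
  choose n x hmn hx using hbad
  obtain ⟨ρ, hρ, hle⟩ := exists_mem_invariantMeasures_le hT
    (tendsto_atTop_mono (fun m => (hmn m).le) tendsto_id) x
  have hfreq (m : ℕ) : (K : ENNReal)⁻¹ ≤ (ρ : Measure X) (W m)ᶜ := by
    refine hle _ (hW m).isClosed_compl _ ?_
    filter_upwards [eventually_ge_atTop m] with j hj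
    exact (inv_le_empiricalMeasure_compl (hW j).measurableSet (hmn j).ne_bot (hx j)).trans
      (measure_mono (compl_subset_compl.2 (hmono hj)))
  have hlim := tendsto_measure_iInter_atTop (μ := (ρ : Measure X)) (s := fun m => (W m)ᶜ)
    (fun m => (hW m).measurableSet.compl.nullMeasurableSet)
    (fun _ _ h => compl_subset_compl.2 (hmono h)) ⟨0, measure_ne_top _ _⟩
  rw [← compl_iUnion, hinv ρ hρ] at hlim
  exact ENNReal.inv_ne_zero.2 (ENNReal.natCast_ne_top K)
    (nonpos_iff_eq_zero.1 (ge_of_tendsto' hlim hfreq))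

end CompactInvariantMeasures

section ErgodicNull

variable {ι : Type*} {T : X → X} {u : ι → Set X} {r r' : ENNReal} {Z : Set X}

lemma IsCylinderNull.exists_monotone_finset [Countable ι] (hZ : IsCylinderNull T u r Z) :
    ∃ g : ℕ → Finset (List ι), Monotone g ∧ Z ⊆ ⋃ m, cylinderUnion T u (g m) ∧
      ∀ m, ∑ w ∈ g m, r ^ w.length ≤ 2⁻¹ := by
  obtain ⟨G, hG, hprice⟩ := hZ 2⁻¹ (by simp)
  let E := G.to_countable.finiteExhaustion
  have hE (m : ℕ) : ((E.finite m).toFinset : Set (List ι)) = E m := (E.finite m).coe_toFinset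
  refine ⟨fun m => (E.finite m).toFinset, fun _ _ h => Finite.toFinset_mono (E.mono h), ?_,
    fun m => ?_⟩
  · simp only [hE]
    rwa [← cylinderUnion_iUnion, E.iUnion_eq]
  · calc ∑ w ∈ (E.finite m).toFinset, r ^ w.length
        = ∑' w : ((E.finite m).toFinset : Set (List ι)), r ^ w.1.length :=
          (Finset.tsum_subtype _ fun w : List ι => r ^ w.length).symm
      _ ≤ ∑' w : G, r ^ w.1.length := by
          rw [hE]
          exact ENNReal.tsum_mono_subtype (fun w : List ι => r ^ w.length)
            ((subset_iUnion E m).trans_eq E.iUnion_eq)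
      _ ≤ 2⁻¹ := hprice

lemma measurableSet_cylinderUnion [Countable ι] [MeasurableSpace X] (hT : Measurable T)
    (hu : ∀ a, MeasurableSet (u a)) (G : Set (List ι)) :
    MeasurableSet (cylinderUnion T u G) := by
  have hcyl (w : List ι) : MeasurableSet (wordCylinder T u w) := by
    induction w with
    | nil => exact .univ
    | cons a w ih => exact (hu a).inter (hT ih)
  exact .biUnion (to_countable G) fun w _ => hcyl w

lemma IsCylinderNull.exists_monotone_finset_measure_compl_eq_zero [Countable ι]
    [MeasurableSpace X] (hu : ⋃ a, u a = univ) (hr : r ≤ 1) (hZ : IsCylinderNull T u r Z)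
    (hZm : MeasurableSet Z) :
    ∃ g : ℕ → Finset (List ι), Monotone g ∧ (∀ m, ∑ w ∈ g m, r ^ w.length ≤ 2⁻¹) ∧
      ∀ μ ∈ ergodicMeasures T, μ Z ≠ 0 → μ (⋃ m, cylinderUnion T u (g m))ᶜ = 0 := by
  obtain ⟨g, hmono, hcover, hprice⟩ :=
    (hZ.iUnion_preimage_iterate hu hr).exists_monotone_finset
  refine ⟨g, hmono, hprice, fun μ ⟨_, hμ⟩ hμZ => ?_⟩
  exact measure_mono_null (compl_subset_compl.2 hcover)
    (measure_compl_iUnion_preimage_iterate hμ hZm hμZ)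

lemma exists_finset_two_inv_le_measure_rareExits [Countable ι] [MeasurableSpace X]
    (hum : ∀ a, MeasurableSet (u a)) (hu : ⋃ a, u a = univ) (hr : r ≤ 1)
    (hZ : IsCylinderNull T u r Z) (hZm : MeasurableSet Z) {μ : Measure X}
    (hμ : μ ∈ ergodicMeasures T) (hμZ : μ Z ≠ 0) (K : ℕ) :
    ∃ g : Finset (List ι), ∑ w ∈ g, r ^ w.length ≤ 2⁻¹ ∧
      ∀ n ≠ 0, 2⁻¹ ≤ μ (rareExits T (cylinderUnion T u g) K n) := by
  obtain ⟨g, hmono, hprice, hnull⟩ :=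
    hZ.exists_monotone_finset_measure_compl_eq_zero hu hr hZm
  obtain ⟨_, hμT⟩ := id hμ
  have hmeas (m : ℕ) : MeasurableSet (cylinderUnion T u (g m)) :=
    measurableSet_cylinderUnion hμT.measurable hum _
  have hlim : Tendsto (fun m => K * μ (cylinderUnion T u (g m))ᶜ) atTop (𝓝 0) := by
    rw [← mul_zero (K : ENNReal), ← hnull μ hμ hμZ, compl_iUnion]
    exact ENNReal.Tendsto.const_mul (tendsto_measure_iInter_atTop
      (fun m => (hmeas m).compl.nullMeasurableSet)
      (fun _ _ h => compl_subset_compl.2 (cylinderUnion_mono (hmono h)))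
      ⟨0, measure_ne_top _ _⟩) (.inr (ENNReal.natCast_ne_top K))
  obtain ⟨m, hm⟩ := (hlim.eventually_le_const (u := 2⁻¹) (by simp)).exists
  exact ⟨g m, hprice m, fun n hn =>
    two_inv_le_measure_rareExits hμT.toMeasurePreserving (hmeas m) hm hn⟩

lemma exists_isCylinderNull_forall_measure_ne_zero [Finite ι] [MeasurableSpace X]
    (hT : Measurable T) (hum : ∀ a, MeasurableSet (u a)) (hu : ⋃ a, u a = univ) (hr : r ≤ 1)
    (hr' : r' < r)
    (h : ∀ μ ∈ ergodicMeasures T, ∃ Z, MeasurableSet Z ∧ μ Z ≠ 0 ∧ IsCylinderNull T u r Z) :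
    ∃ Z, MeasurableSet Z ∧ IsCylinderNull T u r' Z ∧ ∀ μ ∈ ergodicMeasures T, μ Z ≠ 0 := by
  obtain ⟨ρ, hr'ρ, hρr⟩ := exists_between hr'
  obtain ⟨K, hK⟩ := exists_forall_eventually_wordCoverNum_le (T := T) hu hr hρr
  let D (g : Finset (List ι)) (n : ℕ) : Set X := rareExits T (cylinderUnion T u g) K n
  have hD (g : Finset (List ι)) (n : ℕ) : MeasurableSet (D g n) :=
    measurableSet_rareExits hT (measurableSet_cylinderUnion hT hum _) K n
  let 𝒢 : Set (Finset (List ι)) := {g | ∑ w ∈ g, r ^ w.length ≤ 2⁻¹}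
  refine ⟨⋃ g : 𝒢, limsup (D g) atTop,
    .iUnion fun g => .measurableSet_limsup fun n => hD g n,
    isCylinderNull_iUnion fun g => isCylinderNull_limsup hu hr'ρ
      (hρr.trans_le (hr.trans le_top)).ne (hK g g.2), fun μ hμ hnull => ?_⟩
  obtain ⟨Z, hZm, hμZ, hZ⟩ := h μ hμ
  obtain ⟨g, hprice, hg⟩ :=
    exists_finset_two_inv_le_measure_rareExits hum hu hr hZ hZm hμ hμZ K
  obtain ⟨_, -⟩ := hμ
  have hhalf : 2⁻¹ ≤ μ (limsup (D g) atTop) :=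
    le_measure_limsup (hD g) ((eventually_ne_atTop 0).mono hg).frequently
  have hle : 2⁻¹ ≤ μ (⋃ g : 𝒢, limsup (D g) atTop) :=
    hhalf.trans (measure_mono (subset_iUnion (fun g : 𝒢 => limsup (D g) atTop) ⟨g, hprice⟩))
  rw [hnull] at hle
  simp at hle

end ErgodicNull

section CompactNull

variable [TopologicalSpace X] [CompactSpace X] [T2Space X] [HasOuterApproxClosed X]
  [MeasurableSpace X] [BorelSpace X] {ι : Type*} [Finite ι] {T : X → X} {u : ι → Set X}
  {r r' : ENNReal}

lemma IsCylinderNull.eventually_wordCoverNum_univ_le {Z : Set X} (hZ : IsCylinderNull T u r Z)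
    (hT : Continuous T) (huo : ∀ a, IsOpen (u a)) (hu : ⋃ a, u a = univ) (hr : r ≤ 1)
    (hr' : r' < r) (hZm : MeasurableSet Z) (hμZ : ∀ μ ∈ ergodicMeasures T, μ Z ≠ 0) :
    ∀ᶠ n in atTop, wordCoverNum T u n univ * r' ^ n ≤ 1 := by
  obtain ⟨g, hmono, hprice, hnull⟩ :=
    hZ.exists_monotone_finset_measure_compl_eq_zero hu hr hZm
  have hopen (m : ℕ) : IsOpen (cylinderUnion T u (g m)) := isOpen_cylinderUnion hT huo _
  have hinv (ν) (hν : ν ∈ invariantMeasures T) :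
      (ν : Measure X) (⋃ m, cylinderUnion T u (g m))ᶜ = 0 := by
    obtain ⟨μ, hμ, hmax⟩ := exists_mem_ergodicMeasures_measure_ge hT ⟨ν, hν⟩
      (isOpen_iUnion hopen).isClosed_compl
    exact nonpos_iff_eq_zero.1 ((hmax ν hν).trans_eq (hnull μ hμ (hμZ μ hμ)))
  obtain ⟨K, hK⟩ := exists_forall_eventually_wordCoverNum_le (T := T) hu hr hr'
  obtain ⟨m, hm⟩ := exists_eventually_rareExits_eq_univ hT hopen
    (fun _ _ h => cylinderUnion_mono (hmono h)) hinv K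
  filter_upwards [hm, hK (g m) (hprice m)] with n huniv hn
  rwa [huniv] at hn

lemma eventually_wordCoverNum_univ_le (hT : Continuous T) (huo : ∀ a, IsOpen (u a))
    (hu : ⋃ a, u a = univ) (hr : r ≤ 1) (hr' : r' < r)
    (h : ∀ μ ∈ ergodicMeasures T, ∃ Z, MeasurableSet Z ∧ μ Z ≠ 0 ∧ IsCylinderNull T u r Z) :
    ∀ᶠ n in atTop, wordCoverNum T u n univ * r' ^ n ≤ 1 := by
  obtain ⟨ρ, hr'ρ, hρr⟩ := exists_between hr'
  obtain ⟨Z, hZm, hZ, hμZ⟩ := exists_isCylinderNull_forall_measure_ne_zero hT.measurable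
    (fun a => (huo a).measurableSet) hu hr hρr h
  exact hZ.eventually_wordCoverNum_univ_le hT huo hu (hρr.le.trans hr) hr'ρ hZm hμZ

end CompactNull

section Refinement

variable {T : X → X} {U : Finset (Set X)} {n : ℕ}

lemma mem_dynRefine_iff_exists_wordCylinder {V : Set X} :
    V ∈ dynRefine T U n ↔
      ∃ w : List U, w.length = n ∧ wordCylinder T ((↑) : U → Set X) w = V := by
  constructor
  · rintro ⟨f, hf, rfl⟩
    exact ⟨List.ofFn fun i => ⟨f i, hf i⟩, List.length_ofFn, wordCylinder_ofFn _⟩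
  · rintro ⟨w, rfl, rfl⟩
    refine ⟨fun i => w.get i, fun i => (w.get i).2, ?_⟩
    rw [← wordCylinder_ofFn, List.ofFn_get]

lemma wordCoverNum_sUnion_le_card {F : Finset (Set X)} (hF : ↑F ⊆ dynRefine T U n) :
    wordCoverNum T ((↑) : U → Set X) n (⋃₀ F) ≤ F.card := by
  classical
  have hword (V) (hV : V ∈ F) : ∃ w : List U, w.length = n ∧ wordCylinder T (↑) w = V :=
    mem_dynRefine_iff_exists_wordCylinder.1 (hF hV)
  choose! w hlength hcylinder using hword
  have himage : ∀ v ∈ F.image w, v.length = n := Finset.forall_mem_image.2 hlength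
  refine (wordCoverNum_le_card (S := F.image w) himage ?_).trans
    Finset.card_image_le
  rintro x ⟨V, hV, hx⟩
  refine mem_cylinderUnion.2 ⟨w V, Finset.mem_image_of_mem w hV, ?_⟩
  rwa [hcylinder V hV]

lemma exists_subset_dynRefine_card_le_wordCoverNum (hU : ⋃₀ (U : Set (Set X)) = univ) (n : ℕ) :
    ∃ F : Finset (Set X), ↑F ⊆ dynRefine T U n ∧ ⋃₀ (F : Set (Set X)) = univ ∧
      F.card ≤ wordCoverNum T ((↑) : U → Set X) n univ := by
  classical
  obtain ⟨S, hlength, hcover, hcard⟩ := exists_card_eq_wordCoverNum (T := T)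
    (u := ((↑) : U → Set X)) (sUnion_eq_iUnion.symm.trans hU) n univ
  refine ⟨S.image (wordCylinder T (↑)), fun V hV => ?_, univ_subset_iff.1 fun x hx => ?_,
    Finset.card_image_le.trans_eq hcard⟩
  · obtain ⟨w, hw, rfl⟩ := Finset.mem_image.1 hV
    exact mem_dynRefine_iff_exists_wordCylinder.2 ⟨w, hlength w hw, rfl⟩
  · obtain ⟨w, hw, hxw⟩ := mem_cylinderUnion.1 (hcover hx)
    exact ⟨_, Finset.mem_image_of_mem _ hw, hxw⟩

lemma coverNum_le_card {C : Set (Set X)} {F : Finset (Set X)} (hF : ↑F ⊆ C)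
    (hcover : ⋃₀ (F : Set (Set X)) = univ) : coverNum C ≤ F.card :=
  Nat.sInf_le ⟨F, hF, hcover, rfl⟩

lemma coverNum_dynRefine_le_wordCoverNum (hU : ⋃₀ (U : Set (Set X)) = univ) (n : ℕ) :
    coverNum (dynRefine T U n) ≤ wordCoverNum T ((↑) : U → Set X) n univ := by
  obtain ⟨F, hF, hcover, hcard⟩ := exists_subset_dynRefine_card_le_wordCoverNum (T := T) hU n
  exact (coverNum_le_card hF hcover).trans hcard

lemma exists_card_eq_coverNum_dynRefine (hU : ⋃₀ (U : Set (Set X)) = univ) (n : ℕ) :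
    ∃ F : Finset (Set X), ↑F ⊆ dynRefine T U n ∧ ⋃₀ (F : Set (Set X)) = univ ∧
      F.card = coverNum (dynRefine T U n) := by
  obtain ⟨F, hF, hcover, -⟩ := exists_subset_dynRefine_card_le_wordCoverNum (T := T) hU n
  have hne : {m | ∃ F : Finset (Set X), ↑F ⊆ dynRefine T U n ∧
      ⋃₀ (F : Set (Set X)) = univ ∧ F.card = m}.Nonempty := ⟨_, F, hF, hcover, rfl⟩
  exact Nat.sInf_mem hne

variable [MeasurableSpace X] {μ : Measure X} {δ : ℝ}

lemma shapiraNum_le_card {F : Finset (Set X)} (hF : ↑F ⊆ dynRefine T U n)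
    (hδ : ENNReal.ofReal δ ≤ μ (⋃₀ F)) : shapiraNum T μ U n δ ≤ F.card :=
  Nat.sInf_le ⟨F, hF, hδ, rfl⟩

variable [IsProbabilityMeasure μ]

lemma ofReal_le_measure_univ (hδ : δ ≤ 1) : ENNReal.ofReal δ ≤ μ univ := by
  rwa [measure_univ, ENNReal.ofReal_le_one]

lemma shapiraNum_le_coverNum (hU : ⋃₀ (U : Set (Set X)) = univ) (hδ : δ ≤ 1) (n : ℕ) :
    shapiraNum T μ U n δ ≤ coverNum (dynRefine T U n) := by
  obtain ⟨F, hF, hcover, hcard⟩ := exists_card_eq_coverNum_dynRefine (T := T) hU n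
  exact (shapiraNum_le_card hF (hcover ▸ ofReal_le_measure_univ hδ)).trans_eq hcard

lemma exists_isOpen_wordCoverNum_le_shapiraNum [TopologicalSpace X] (hT : Continuous T)
    (hU : IsFiniteOpenCover U) (hδ : δ ≤ 1) (n : ℕ) :
    ∃ Z, IsOpen Z ∧ ENNReal.ofReal δ ≤ μ Z ∧
      wordCoverNum T ((↑) : U → Set X) n Z ≤ shapiraNum T μ U n δ := by
  obtain ⟨F, hF, hcover, -⟩ := exists_card_eq_coverNum_dynRefine (T := T) hU.2 n
  have hne : {m | ∃ F : Finset (Set X), ↑F ⊆ dynRefine T U n ∧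
      ENNReal.ofReal δ ≤ μ (⋃₀ F) ∧ F.card = m}.Nonempty :=
    ⟨_, F, hF, hcover ▸ ofReal_le_measure_univ hδ, rfl⟩
  obtain ⟨F, hF, hδF, hcard⟩ := Nat.sInf_mem hne
  refine ⟨⋃₀ F, isOpen_sUnion fun V hV => ?_, hδF, (wordCoverNum_sUnion_le_card hF).trans_eq hcard⟩
  obtain ⟨w, -, rfl⟩ := mem_dynRefine_iff_exists_wordCylinder.1 (hF hV)
  exact isOpen_wordCylinder hT (fun V : U => hU.1 V V.2) w

end Refinement

section Entropy

lemma log_natCast_div_nonneg (N n : ℕ) : 0 ≤ Real.log N / n :=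
  div_nonneg (Real.log_natCast_nonneg N) n.cast_nonneg

lemma log_natCast_div_le_iff {a : ℝ} (ha : 0 ≤ a) (N : ℕ) {n : ℕ} (hn : n ≠ 0) :
    Real.log N / n ≤ a ↔ (N : ENNReal) * ENNReal.ofReal (Real.exp (-a)) ^ n ≤ 1 := by
  rcases eq_or_ne N 0 with rfl | hN
  · simpa using ha
  have hexp : (N : ENNReal) * ENNReal.ofReal (Real.exp (-a)) ^ n =
      ENNReal.ofReal (N / Real.exp (a * n)) := by
    rw [← ENNReal.ofReal_natCast, ← ENNReal.ofReal_pow (Real.exp_pos _).le,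
      ← ENNReal.ofReal_mul N.cast_nonneg, ← Real.exp_nat_mul, div_eq_mul_inv, ← Real.exp_neg]
    ring_nf
  rw [hexp, ENNReal.ofReal_le_one, div_le_one (Real.exp_pos _), div_le_iff₀ (by positivity),
    Real.log_le_iff_le_exp (by positivity)]

variable {T : X → X} {U : Finset (Set X)} {δ : ℝ} [MeasurableSpace X]

lemma shapiraEnt_nonneg (T : X → X) (μ : Measure X) (U : Finset (Set X)) (δ : ℝ) :
    0 ≤ shapiraEnt T μ U δ :=
  le_limsup_of_frequently_le (Frequently.of_forall fun n =>
    EReal.coe_nonneg.2 (log_natCast_div_nonneg _ n))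

lemma shapiraEnt_le_limsup_log_coverNum {μ : Measure X} [IsProbabilityMeasure μ]
    (hU : ⋃₀ (U : Set (Set X)) = univ) (hδ : δ ≤ 1) :
    shapiraEnt T μ U δ ≤
      limsup (fun n : ℕ => ((Real.log (coverNum (dynRefine T U n)) / n : ℝ) : EReal)) atTop := by
  refine limsup_le_limsup (.of_forall fun n => EReal.coe_le_coe_iff.2 ?_)
  rcases Nat.eq_zero_or_pos (shapiraNum T μ U n δ) with hzero | hpos
  · simpa [hzero] using log_natCast_div_nonneg (coverNum (dynRefine T U n)) n
  · gcongr
    exact shapiraNum_le_coverNum hU hδ n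

lemma exists_isCylinderNull_of_shapiraEnt_lt [TopologicalSpace X] [OpensMeasurableSpace X]
    {μ : Measure X} [IsProbabilityMeasure μ] (hT : Continuous T) (hU : IsFiniteOpenCover U)
    (hδ : δ ∈ Ioc 0 1) {a : ℝ} {r : ENNReal} (ha : shapiraEnt T μ U δ < a)
    (hr : r < ENNReal.ofReal (Real.exp (-a))) :
    ∃ Z, MeasurableSet Z ∧ μ Z ≠ 0 ∧ IsCylinderNull T ((↑) : U → Set X) r Z := by
  have ha₀ : 0 ≤ a := EReal.coe_nonneg.1 ((shapiraEnt_nonneg T μ U δ).trans ha.le)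
  choose Z hZo hδZ hZnum using fun n =>
    exists_isOpen_wordCoverNum_le_shapiraNum (μ := μ) hT hU hδ.2 n
  have hZm (n : ℕ) : MeasurableSet (Z n) := (hZo n).measurableSet
  refine ⟨limsup Z atTop, .measurableSet_limsup hZm, ?_,
    isCylinderNull_limsup (sUnion_eq_iUnion.symm.trans hU.2) hr ENNReal.ofReal_ne_top ?_⟩
  · have hδlim : ENNReal.ofReal δ ≤ μ (limsup Z atTop) :=
      le_measure_limsup hZm (.of_forall hδZ)
    exact ((ENNReal.ofReal_pos.2 hδ.1).trans_le hδlim).ne'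
  · filter_upwards [eventually_lt_of_limsup_lt ha, eventually_ne_atTop 0] with n hlog hn
    refine le_trans ?_ ((log_natCast_div_le_iff ha₀ _ hn).1 (EReal.coe_le_coe_iff.1 hlog.le))
    gcongr
    exact hZnum n

variable [TopologicalSpace X] [CompactSpace X] [T2Space X] [HasOuterApproxClosed X]
  [BorelSpace X]

lemma limsup_log_coverNum_le_of_forall_shapiraEnt_lt (hT : Continuous T)
    (hU : IsFiniteOpenCover U) (hδ : δ ∈ Ioc 0 1) {a b : ℝ} (ha : 0 ≤ a) (hab : a < b)
    (h : ∀ μ ∈ ergodicMeasures T, shapiraEnt T μ U δ < a) :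
    limsup (fun n : ℕ => ((Real.log (coverNum (dynRefine T U n)) / n : ℝ) : EReal)) atTop
      ≤ b := by
  have hexp : ENNReal.ofReal (Real.exp (-b)) < ENNReal.ofReal (Real.exp (-a)) :=
    (ENNReal.ofReal_lt_ofReal_iff (Real.exp_pos _)).2 (Real.exp_lt_exp.2 (neg_lt_neg hab))
  obtain ⟨r, hbr, hra⟩ := exists_between hexp
  have hr : r ≤ 1 := hra.le.trans (ENNReal.ofReal_le_one.2 (Real.exp_le_one_iff.2 (by simpa)))
  have hcover := eventually_wordCoverNum_univ_le hT (fun V : U => hU.1 V V.2)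
    (sUnion_eq_iUnion.symm.trans hU.2) hr hbr fun μ hμ =>
      have := hμ.1
      exists_isCylinderNull_of_shapiraEnt_lt hT hU hδ (h μ hμ) hra
  refine limsup_le_of_le (h := ?_)
  filter_upwards [hcover, eventually_ne_atTop 0] with n hnum hn
  refine EReal.coe_le_coe_iff.2
    ((log_natCast_div_le_iff (ha.trans hab.le) _ hn).2 (le_trans ?_ hnum))
  gcongr
  exact coverNum_dynRefine_le_wordCoverNum hU.2 n

theorem coverEnt_eq_iSup_shapiraEnt_general [Nonempty X] (T : X → X) (hT : Continuous T)
    (U : Finset (Set X)) (hU : IsFiniteOpenCover U) (δ : ℝ) (hδ : δ ∈ Ioc (0 : ℝ) 1) :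
    limsup (fun n : ℕ => ((Real.log (coverNum (dynRefine T U n)) / n : ℝ) : EReal)) atTop
      = ⨆ μ ∈ ergodicMeasures T, shapiraEnt T μ U δ := by
  refine le_antisymm ?_ (iSup₂_le fun μ ⟨_, _⟩ => shapiraEnt_le_limsup_log_coverNum hU.2 hδ.2)
  have hle (μ) (hμ : μ ∈ ergodicMeasures T) :
      shapiraEnt T μ U δ ≤ ⨆ μ ∈ ergodicMeasures T, shapiraEnt T μ U δ :=
    le_iSup₂ (f := fun μ (_ : μ ∈ ergodicMeasures T) => shapiraEnt T μ U δ) μ hμ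
  obtain ⟨μ, hμ, -⟩ :=
    exists_mem_ergodicMeasures_measure_ge hT (invariantMeasures_nonempty hT) isClosed_univ
  refine EReal.le_of_forall_lt_iff_le.1 fun b hb => ?_
  obtain ⟨a, hsup, hab⟩ := EReal.lt_iff_exists_real_btwn.1 hb
  have ha : 0 ≤ a :=
    EReal.coe_nonneg.1 ((shapiraEnt_nonneg T μ U δ).trans ((hle μ hμ).trans hsup.le))
  exact limsup_log_coverNum_le_of_forall_shapiraEnt_lt hT hU hδ ha (EReal.coe_lt_coe_iff.1 hab)
    fun μ hμ => (hle μ hμ).trans_lt hsup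

end Entropy

section Theorems

variable [MetricSpace X] [CompactSpace X] [Nonempty X] [MeasurableSpace X] [BorelSpace X]

/-- Local variational principle for the topological entropy of a finite open cover in
terms of Shapira's entropy (Theorem 2.4): `h_top(U, T) = sup_{μ ergodic} h_μ^S(U, δ)`.
Since the limit defining `h_top(U, T)` exists, it is expressed here as a `limsup`. -/
theorem coverEnt_eq_iSup_shapiraEnt (T : X → X) (hT : IsHomeomorph T)
    (U : Finset (Set X)) (hU : IsFiniteOpenCover U)
    (δ : ℝ) (hδ : δ ∈ Set.Ioo (0:ℝ) 1) :
    limsup (fun n : ℕ => ((Real.log (coverNum (dynRefine T U n)) / n : ℝ) : EReal)) atTop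
      = ⨆ μ ∈ ergodicMeasures T, shapiraEnt T μ U δ :=
  coverEnt_eq_iSup_shapiraEnt_general T hT.continuous U hU δ (Ioo_subset_Ioc_self hδ)

end Theorems
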